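/- arXiv:math/0012217 — 3 statements merged into one kernel-verified Lean document; each statement's English description precedes it below -/
import Mathlib

section
/- The inclusion A_5 ↪ A_6, given by extending each even permutation of {1, …, 5} to a permutation of {1, …, 6} fixing the point 6, is a localization. -/
/-- A group homomorphism `φ : H →* G` is a localization if precomposition with `φ`
induces a bijection `Hom(G,G) ≃ Hom(H,G)`. -/
def IsLocalizationHom {H G : Type*} [Group H] [Group G] (φ : H →* G) : Prop :=
  Function.Bijective fun ψ : G →* G => ψ.comp φ

/-!
For finite simple groups, an injective homomorphism `f : H →* G` is a localization as soon as
automorphisms of `H` extend to `G`, every copy of `H` in `G` is carried onto `f.range` by an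
automorphism of `G`, and no nontrivial automorphism of `G` fixes `f.range` pointwise.

For `A_n ↪ A_{n+1}` a copy of `A_n` has index `n + 1`, and the action of `A_{n+1}` on its cosets
is an automorphism of `A_{n+1}` carrying it to a point stabilizer. An automorphism `a` fixing the
stabilizer of `x` pointwise satisfies `a g • x ∈ {x, g • x}`, since these are the only points fixed
by the common stabilizer of `x` and `g • x`; this forces `a = 1`. What remains is that
automorphisms of `A_n` are conjugations by elements of `S_n`, which may fail (`n = 6`). For `n = p`
prime, a subgroup of index `p` has an orbit of some size `m < p` with `p.choose m ∣ p`, so it is a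
point stabilizer; hence an automorphism permutes the point stabilizers, and so the points.
-/

open Equiv MulAction
open scoped Pointwise

section SimpleGroups

variable {G H : Type*} [Group G] [Group H]

lemma injective_or_eq_one_of_isSimpleGroup [IsSimpleGroup G] (f : G →* H) :
    Function.Injective f ∨ f = 1 :=
  f.normal_ker.eq_bot_or_eq_top.imp (MonoidHom.ker_eq_bot_iff f).1 MonoidHom.ker_eq_top_iff.1

lemma exists_mulAut_or_eq_one [IsSimpleGroup G] [Finite G] (ψ : G →* G) :
    (∃ a : MulAut G, ψ = a.toMonoidHom) ∨ ψ = 1 :=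
  (injective_or_eq_one_of_isSimpleGroup ψ).imp_left fun hψ =>
    ⟨MulEquiv.ofBijective ψ (Finite.injective_iff_bijective.1 hψ), rfl⟩

variable {f : H →* G}

lemma comp_injective_of_centralizer_trivial [Nontrivial H] [IsSimpleGroup G] [Finite G]
    (hf : Function.Injective f)
    (hcentralizer : ∀ a : MulAut G, (∀ h, a (f h) = f h) → a = 1) :
    Function.Injective fun ψ : G →* G => ψ.comp f := by
  have comp_ne_one (a : MulAut G) : a.toMonoidHom.comp f ≠ 1 := by
    intro h
    obtain ⟨x, hx⟩ := exists_ne (1 : H)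
    have hax : a (f x) = 1 := DFunLike.congr_fun h x
    exact hx (hf (by simpa using hax))
  intro ψ₁ ψ₂ h
  change ψ₁.comp f = ψ₂.comp f at h
  rcases exists_mulAut_or_eq_one ψ₁ with ⟨a, rfl⟩ | rfl <;>
    rcases exists_mulAut_or_eq_one ψ₂ with ⟨b, rfl⟩ | rfl
  · have hab : b⁻¹ * a = 1 := hcentralizer _ fun x => by
      rw [MulAut.mul_apply, show a (f x) = b (f x) from DFunLike.congr_fun h x,
        MulAut.inv_apply_self]
    rw [inv_mul_eq_one.1 hab]
  · exact (comp_ne_one a h).elim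
  · exact (comp_ne_one b h.symm).elim
  · rfl

lemma comp_surjective_of_extends_of_conjugate [IsSimpleGroup H] (hf : Function.Injective f)
    (hextends : ∀ b : MulAut H, ∃ a : MulAut G, ∀ h, a (f h) = f (b h))
    (hconjugate : ∀ g : H →* G, Function.Injective g →
      ∃ a : MulAut G, g.range.map a.toMonoidHom = f.range) :
    Function.Surjective fun ψ : G →* G => ψ.comp f := by
  intro g
  rcases injective_or_eq_one_of_isSimpleGroup g with hg | rfl
  swap
  · exact ⟨1, rfl⟩
  obtain ⟨a, ha⟩ := hconjugate g hg
  have hag : Function.Injective (a.toMonoidHom.comp g) := a.injective.comp hg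
  have hrange : (a.toMonoidHom.comp g).range = f.range := by rw [MonoidHom.range_comp, ha]
  let b : MulAut H := (MonoidHom.ofInjective hag).trans
    ((MulEquiv.subgroupCongr hrange).trans (MonoidHom.ofInjective hf).symm)
  have hb (h : H) : f (b h) = a (g h) :=
    congrArg Subtype.val ((MonoidHom.ofInjective hf).apply_symm_apply _)
  obtain ⟨c, hc⟩ := hextends b
  refine ⟨(a⁻¹ * c).toMonoidHom, MonoidHom.ext fun h => ?_⟩
  change a⁻¹ (c (f h)) = g h
  rw [hc, hb, MulAut.inv_apply_self]

theorem isLocalizationHom_of_isSimpleGroup [IsSimpleGroup H] [IsSimpleGroup G] [Finite G]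
    (hf : Function.Injective f)
    (hextends : ∀ b : MulAut H, ∃ a : MulAut G, ∀ h, a (f h) = f (b h))
    (hconjugate : ∀ g : H →* G, Function.Injective g →
      ∃ a : MulAut G, g.range.map a.toMonoidHom = f.range)
    (hcentralizer : ∀ a : MulAut G, (∀ h, a (f h) = f h) → a = 1) :
    IsLocalizationHom f :=
  ⟨comp_injective_of_centralizer_trivial hf hcentralizer,
    comp_surjective_of_extends_of_conjugate hf hextends hconjugate⟩

end SimpleGroups

section GroupActions

variable {G X : Type*} [Group G] [MulAction G X]

lemma mulAut_smul_eq_of_fixes_stabilizer {x : X} (a : MulAut G)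
    (hx : ∀ y z : X, stabilizer G x ⊓ stabilizer G y ≤ stabilizer G z → z = x ∨ z = y)
    (ha : ∀ k ∈ stabilizer G x, a k = k) (g : G) :
    a g • x = g • x := by
  have hle : stabilizer G x ⊓ stabilizer G (g • x) ≤ stabilizer G (a g • x) := by
    rintro k ⟨hkx, hkgx⟩
    have hconj : g⁻¹ * k * g ∈ stabilizer G x := by
      rw [mem_stabilizer_iff, mul_smul, mul_smul, mem_stabilizer_iff.1 hkgx, inv_smul_smul]
    have hfix : (a g)⁻¹ * k * a g = g⁻¹ * k * g := by
      simpa [ha k hkx] using ha _ hconj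
    rw [← hfix, mem_stabilizer_iff, mul_smul, mul_smul, inv_smul_eq_iff] at hconj
    exact hconj
  rcases hx _ _ hle with h | h
  · rw [a.injective (ha (a g) h)]
  · exact h

theorem mulAut_eq_one_of_fixes_stabilizer [FaithfulSMul G X] [IsPretransitive G X] {x : X}
    (a : MulAut G)
    (hx : ∀ y z : X, stabilizer G x ⊓ stabilizer G y ≤ stabilizer G z → z = x ∨ z = y)
    (ha : ∀ k ∈ stabilizer G x, a k = k) :
    a = 1 := by
  have hsmul := mulAut_smul_eq_of_fixes_stabilizer a hx ha
  ext g
  refine eq_of_smul_eq_smul fun y : X => ?_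
  obtain ⟨h, rfl⟩ := exists_smul_eq G x y
  rw [← hsmul h, ← mul_smul, ← map_mul, hsmul, hsmul, mul_smul, MulAut.one_apply]

theorem exists_perm_semiconj_of_map_stabilizer [IsPretransitive G X]
    (hinj : Function.Injective fun x : X => stabilizer G x) (b : MulAut G)
    (hb : ∀ x : X, ∃ y : X, (stabilizer G x).map b.toMonoidHom = stabilizer G y) :
    ∃ c : Perm X, ∀ (g : G) (x : X), c (g • x) = b g • c x := by
  choose c hc using hb
  have hsmul (g : G) (x : X) : c (g • x) = b g • c x := by
    apply hinj
    simp only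
    rw [← hc, stabilizer_smul_eq_stabilizer_map_conj, stabilizer_smul_eq_stabilizer_map_conj,
      ← hc, Subgroup.map_map, Subgroup.map_map]
    congr 1
    ext k
    simp
  refine ⟨Equiv.ofBijective c ⟨fun x y hxy => ?_, fun y => ?_⟩, hsmul⟩
  · refine hinj (Subgroup.map_injective (f := b.toMonoidHom) b.injective ?_)
    rw [hc, hc, hxy]
  · obtain ⟨g, hg⟩ := exists_smul_eq G (c y) y
    exact ⟨b.symm g • y, by rw [hsmul, MulEquiv.apply_symm_apply, hg]⟩

lemma eq_stabilizer_of_le_of_index_eq_card [Finite X] [IsPretransitive G X] {x : X}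
    {K : Subgroup G} (hle : K ≤ stabilizer G x) (hK : K.index = Nat.card X) :
    K = stabilizer G x := by
  have : Nonempty X := ⟨x⟩
  have hindex : (stabilizer G x).index = K.index := by
    rw [hK, index_stabilizer_of_transitive]
  have : K.FiniteIndex := ⟨hK.trans_ne Nat.card_pos.ne'⟩
  by_contra hne
  exact (Subgroup.index_strictAnti (hle.lt_of_ne hne)).ne hindex

lemma le_stabilizer_orbit (K : Subgroup G) (x : X) : K ≤ stabilizer G (orbit K x) :=
  fun k hk => smul_orbit (⟨k, hk⟩ : K) x

lemma index_stabilizer_set [Finite X] [DecidableEq X] (s : Set X)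
    (hs : IsPretransitive G (Set.powersetCard X s.ncard)) :
    (stabilizer G s).index = (Nat.card X).choose s.ncard := by
  let t : Set.powersetCard X s.ncard := ⟨s.toFinite.toFinset, (s.ncard_eq_toFinset_card _).symm⟩
  have ht : (t : Set X) = s := s.toFinite.coe_toFinset
  have hindex := index_stabilizer_of_transitive G t
  rwa [Set.powersetCard.stabilizer_coe, ht, Set.powersetCard.card] at hindex

end GroupActions

section CosetActions

variable {G : Type*} [Group G]

lemma exists_hom_perm_of_index_eq_card {X : Type*} [Finite X] (K : Subgroup G)
    (hK : K.index = Nat.card X) (x : X) :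
    ∃ ρ : G →* Perm X, ∀ g, ρ g x = x ↔ g ∈ K := by
  classical
  have : Nonempty X := ⟨x⟩
  have : Finite (G ⧸ K) := Nat.finite_of_card_ne_zero (hK.trans_ne Nat.card_pos.ne')
  obtain ⟨e₀⟩ : Nonempty (G ⧸ K ≃ X) := (Finite.card_eq).1 hK
  let e : G ⧸ K ≃ X := e₀.trans (swap (e₀ (1 : G)) x)
  have he : e.symm x = (1 : G) := by simp [e]
  refine ⟨e.permCongrHom.toMonoidHom.comp (toPermHom G (G ⧸ K)), fun g => ?_⟩
  change e (g • e.symm x) = x ↔ g ∈ K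
  rw [← eq_symm_apply, he, ← mem_stabilizer_iff, stabilizer_quotient]

lemma apply_mem_alternatingGroup_of_isSimpleGroup {α : Type*} [Fintype α] [DecidableEq α]
    [IsSimpleGroup G] (hG : 2 < Nat.card G) (ρ : G →* Perm α) (g : G) :
    ρ g ∈ alternatingGroup α := by
  rcases injective_or_eq_one_of_isSimpleGroup (Perm.sign.comp ρ) with hinj | hone
  · have hcard := Nat.card_le_card_of_injective _ hinj
    simp only [Nat.card_eq_fintype_card, Fintype.card_units_int] at hcard
    omega
  · exact Perm.mem_alternatingGroup.2 (DFunLike.congr_fun hone g)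

end CosetActions

lemma lt_choose_of_two_le {n k : ℕ} (hk : 2 ≤ k) (hkn : k + 2 ≤ n) : n < n.choose k := by
  induction n, hkn using Nat.le_induction with
  | base =>
    rw [Nat.choose_symm_add, Nat.choose_two_right, Nat.lt_iff_add_one_le,
      Nat.le_div_iff_mul_le two_pos, Nat.add_succ_sub_one]
    nlinarith
  | succ n hn ih =>
    have hpascal := Nat.choose_succ_left n k (by omega)
    have hpos : 0 < n.choose (k - 1) := Nat.choose_pos (by omega)
    omega

section AlternatingGroup

variable {α : Type*} [Fintype α] [DecidableEq α]

lemma two_lt_card_alternatingGroup (hα : 4 ≤ Nat.card α) :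
    2 < Nat.card (alternatingGroup α) := by
  have : Nontrivial α := Finite.one_lt_card_iff_nontrivial.1 (by omega)
  have hfactorial := Nat.factorial_le hα
  rw [nat_card_alternatingGroup]
  simp only [Nat.factorial] at hfactorial
  omega

theorem exists_mulAut_map_eq_stabilizer (hα : 5 ≤ Nat.card α)
    (K : Subgroup (alternatingGroup α)) (hK : K.index = Nat.card α) (x : α) :
    ∃ a : MulAut (alternatingGroup α),
      K.map a.toMonoidHom = stabilizer (alternatingGroup α) x := by
  have : IsSimpleGroup (alternatingGroup α) := alternatingGroup.isSimpleGroup hα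
  obtain ⟨ρ, hρ⟩ := exists_hom_perm_of_index_eq_card K hK x
  let ψ : alternatingGroup α →* alternatingGroup α := ρ.codRestrict _
    (apply_mem_alternatingGroup_of_isSimpleGroup (two_lt_card_alternatingGroup (by omega)) ρ)
  have hψ (g : alternatingGroup α) : ψ g ∈ stabilizer (alternatingGroup α) x ↔ g ∈ K := hρ g
  rcases exists_mulAut_or_eq_one ψ with ⟨a, ha⟩ | hone
  · refine ⟨a, Subgroup.ext fun g => ⟨?_, fun hg => ⟨a.symm g, ?_, a.apply_symm_apply g⟩⟩⟩
    · rintro ⟨k, hk, rfl⟩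
      rw [← ha]
      exact (hψ k).2 hk
    · refine (hψ _).1 ?_
      rw [ha]
      simpa using hg
  · have hKtop : K = ⊤ := (Subgroup.eq_top_iff' K).2 fun g => (hψ g).1 (by simp [hone])
    rw [hKtop, Subgroup.index_top] at hK
    omega

lemma exists_mem_stabilizer_inf_stabilizer_smul_ne (hα : 5 ≤ Nat.card α) {x y z : α}
    (hzx : z ≠ x) (hzy : z ≠ y) :
    ∃ k ∈ stabilizer (alternatingGroup α) x ⊓ stabilizer (alternatingGroup α) y, k • z ≠ z := by
  obtain ⟨u, hu, v, hv, huv⟩ : ∃ u ∈ ({x, y, z} : Finset α)ᶜ, ∃ v ∈ ({x, y, z} : Finset α)ᶜ,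
      u ≠ v := by
    have hcard := Finset.card_le_three (a := x) (b := y) (c := z)
    rw [← Finset.one_lt_card, Finset.card_compl, ← Nat.card_eq_fintype_card]
    omega
  simp only [Finset.mem_compl, Finset.mem_insert, Finset.mem_singleton, not_or, ← ne_eq] at hu hv
  obtain ⟨hux, huy, huz⟩ := hu
  obtain ⟨hvx, hvy, hvz⟩ := hv
  have hcycle := Perm.isThreeCycle_swap_mul_swap_same huz.symm hvz.symm huv
  refine ⟨⟨swap z u * swap z v, hcycle.mem_alternatingGroup⟩, ⟨?_, ?_⟩, ?_⟩
  · change swap z u (swap z v x) = x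
    rw [swap_apply_of_ne_of_ne hzx.symm hvx.symm, swap_apply_of_ne_of_ne hzx.symm hux.symm]
  · change swap z u (swap z v y) = y
    rw [swap_apply_of_ne_of_ne hzy.symm hvy.symm, swap_apply_of_ne_of_ne hzy.symm huy.symm]
  · change swap z u (swap z v z) ≠ z
    rwa [swap_apply_left, swap_apply_of_ne_of_ne hvz huv.symm]

lemma eq_or_eq_of_stabilizer_inf_stabilizer_le (hα : 5 ≤ Nat.card α) {x y z : α}
    (hle : stabilizer (alternatingGroup α) x ⊓ stabilizer (alternatingGroup α) y ≤
      stabilizer (alternatingGroup α) z) :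
    z = x ∨ z = y := by
  by_contra! hz
  obtain ⟨k, hk, hkz⟩ := exists_mem_stabilizer_inf_stabilizer_smul_ne hα hz.1 hz.2
  exact hkz (hle hk)

lemma stabilizer_alternatingGroup_injective (hα : 5 ≤ Nat.card α) :
    Function.Injective fun x : α => stabilizer (alternatingGroup α) x := by
  intro x y hxy
  have hle : stabilizer (alternatingGroup α) x ⊓ stabilizer (alternatingGroup α) x ≤
      stabilizer (alternatingGroup α) y := by rw [inf_idem]; exact hxy.le
  exact (eq_or_eq_of_stabilizer_inf_stabilizer_le hα hle).elim Eq.symm Eq.symm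

lemma not_dvd_card_of_index_eq_prime (hα : (Nat.card α).Prime)
    (K : Subgroup (alternatingGroup α)) (hK : K.index = Nat.card α) :
    ¬ Nat.card α ∣ Nat.card K := by
  have : Nontrivial α := Finite.one_lt_card_iff_nontrivial.1 hα.one_lt
  have hcard : 2 * Nat.card K = (Nat.card α - 1).factorial := by
    apply Nat.eq_of_mul_eq_mul_left hα.pos
    rw [Nat.mul_factorial_pred hα.ne_zero, ← Nat.card_perm, ← two_mul_nat_card_alternatingGroup,
      ← K.index_mul_card, hK]
    ring
  intro hdvd
  have := (hα.dvd_factorial).1 (hcard ▸ hdvd.mul_left 2)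
  have := hα.pos
  omega

lemma ncard_orbit_eq_one_or_ncard_compl_eq_one (hα : (Nat.card α).Prime) (h3 : 3 ≤ Nat.card α)
    (K : Subgroup (alternatingGroup α)) (hK : K.index = Nat.card α) (x : α) :
    (orbit K x).ncard = 1 ∨ (orbit K x)ᶜ.ncard = 1 := by
  have hchoose : (Nat.card α).choose (orbit K x).ncard ∣ Nat.card α := by
    have hdvd := Subgroup.index_dvd_of_le (le_stabilizer_orbit K x)
    rwa [hK, index_stabilizer_set _
      (Set.powersetCard.isPretransitive_alternatingGroup h3)] at hdvd
  have hdvd : (orbit K x).ncard ∣ Nat.card K :=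
    index_stabilizer K x ▸ (stabilizer K x).index_dvd_card
  have hne : (orbit K x).ncard ≠ Nat.card α := fun h =>
    not_dvd_card_of_index_eq_prime hα K hK (h ▸ hdvd)
  have hpos : 0 < (orbit K x).ncard := (Set.ncard_pos).2 (nonempty_orbit x)
  have hcompl := Set.ncard_add_ncard_compl (orbit K x)
  by_contra! hncard
  exact (lt_choose_of_two_le (by omega) (by omega)).not_ge (Nat.le_of_dvd hα.pos hchoose)

theorem exists_eq_stabilizer_of_index_eq_prime (hα : (Nat.card α).Prime) (h3 : 3 ≤ Nat.card α)
    (K : Subgroup (alternatingGroup α)) (hK : K.index = Nat.card α) :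
    ∃ x : α, K = stabilizer (alternatingGroup α) x := by
  have := alternatingGroup.isPretransitive_of_three_le_card α h3
  obtain ⟨x₀⟩ : Nonempty α := (Nat.card_pos_iff.1 hα.pos).1
  have hstab := le_stabilizer_orbit K x₀
  obtain ⟨x, hx⟩ : ∃ x : α, K ≤ stabilizer (alternatingGroup α) ({x} : Set α) := by
    rcases ncard_orbit_eq_one_or_ncard_compl_eq_one hα h3 K hK x₀ with h | h <;>
      obtain ⟨x, hx⟩ := Set.ncard_eq_one.1 h
    · exact ⟨x, hx ▸ hstab⟩
    · exact ⟨x, by rwa [← hx, stabilizer_compl]⟩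
  rw [stabilizer_singleton] at hx
  exact ⟨x, eq_stabilizer_of_le_of_index_eq_card hx hK⟩

theorem exists_mulAut_eq_conjNormal_of_prime (hα : (Nat.card α).Prime) (h5 : 5 ≤ Nat.card α)
    (b : MulAut (alternatingGroup α)) :
    ∃ c : Perm α, b = MulAut.conjNormal c := by
  have := alternatingGroup.isPretransitive_of_three_le_card α (by omega)
  obtain ⟨c, hc⟩ := exists_perm_semiconj_of_map_stabilizer
    (stabilizer_alternatingGroup_injective h5) b fun x =>
      exists_eq_stabilizer_of_index_eq_prime hα (by omega) _ <|
        ((stabilizer (alternatingGroup α) x).index_map_equiv b).trans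
          (index_stabilizer_of_transitive _ x)
  refine ⟨c, MulEquiv.ext fun g => Subtype.ext ?_⟩
  rw [MulAut.conjNormal_apply, eq_mul_inv_iff_mul_eq]
  exact Equiv.ext fun x => (hc g x).symm

end AlternatingGroup

lemma card_eq_card_add_one_of_range_eq {α β : Type*} [Finite β] {ι : α ↪ β} {x : β}
    (hι : Set.range ι = {x}ᶜ) :
    Nat.card β = Nat.card α + 1 := by
  rw [← Set.ncard_add_ncard_compl {x}, Set.ncard_singleton, ← hι,
    Set.ncard_range_of_injective ι.injective, add_comm]

section AlternatingGroupMap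

variable {α β : Type*} [Fintype α] [DecidableEq α] [Fintype β] [DecidableEq β]

lemma sign_viaEmbeddingHom (ι : α ↪ β) (σ : Perm α) :
    Perm.sign (Perm.viaEmbeddingHom ι σ) = Perm.sign σ := by
  classical
  rw [Perm.viaEmbeddingHom_apply, Perm.viaEmbedding]
  convert Perm.sign_extendDomain σ _

lemma viaEmbeddingHom_mem_alternatingGroup (ι : α ↪ β) (σ : alternatingGroup α) :
    Perm.viaEmbeddingHom ι (σ : Perm α) ∈ alternatingGroup β := by
  rw [Perm.mem_alternatingGroup, sign_viaEmbeddingHom]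
  exact Perm.mem_alternatingGroup.1 σ.2

/-- The homomorphism of alternating groups induced by an embedding `ι : α ↪ β`: an even permutation
of `α` is extended by the identity outside the range of `ι`. For `ι = Fin.castSuccEmb` this is the
standard inclusion `A_n ↪ A_{n+1}`. -/
noncomputable def alternatingGroupMap (ι : α ↪ β) : alternatingGroup α →* alternatingGroup β :=
  ((Perm.viaEmbeddingHom ι).comp (alternatingGroup α).subtype).codRestrict _
    (viaEmbeddingHom_mem_alternatingGroup ι)

lemma coe_alternatingGroupMap (ι : α ↪ β) (σ : alternatingGroup α) :
    (alternatingGroupMap ι σ : Perm β) = Perm.viaEmbeddingHom ι (σ : Perm α) :=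
  rfl

lemma alternatingGroupMap_injective (ι : α ↪ β) : Function.Injective (alternatingGroupMap ι) :=
  fun _ _ h => Subtype.ext (Perm.viaEmbeddingHom_injective ι (congrArg Subtype.val h))

lemma conjNormal_alternatingGroupMap (ι : α ↪ β) (c : Perm α) (σ : alternatingGroup α) :
    MulAut.conjNormal (Perm.viaEmbeddingHom ι c) (alternatingGroupMap ι σ) =
      alternatingGroupMap ι (MulAut.conjNormal c σ) := by
  apply Subtype.ext
  simp only [MulAut.conjNormal_apply, coe_alternatingGroupMap, map_mul, map_inv]

lemma index_range_eq_card_of_injective [Nontrivial α] (hcard : Nat.card β = Nat.card α + 1)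
    {g : alternatingGroup α →* alternatingGroup β} (hg : Function.Injective g) :
    g.range.index = Nat.card β := by
  have : Nontrivial β := Finite.one_lt_card_iff_nontrivial.1 <| by
    have := Finite.one_lt_card (α := α)
    omega
  have hrange : Nat.card g.range = Nat.card (alternatingGroup α) :=
    (Nat.card_congr (MonoidHom.ofInjective hg).toEquiv).symm
  refine Nat.eq_of_mul_eq_mul_right (Nat.card_pos (α := alternatingGroup α))
    (Nat.eq_of_mul_eq_mul_left two_pos ?_)
  calc 2 * (g.range.index * Nat.card (alternatingGroup α))
      = (Nat.card β).factorial := by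
        rw [← hrange, g.range.index_mul_card, two_mul_nat_card_alternatingGroup, Nat.card_perm]
    _ = Nat.card β * (Nat.card α).factorial := by rw [hcard, Nat.factorial_succ]
    _ = 2 * (Nat.card β * Nat.card (alternatingGroup α)) := by
        rw [← Nat.card_perm, ← two_mul_nat_card_alternatingGroup, Nat.mul_left_comm]

variable {ι : α ↪ β} {x : β}

lemma range_alternatingGroupMap_le_stabilizer (hx : x ∉ Set.range ι) :
    (alternatingGroupMap ι).range ≤ stabilizer (alternatingGroup β) x := by
  rintro _ ⟨σ, rfl⟩
  exact Perm.viaEmbedding_apply_of_notMem (σ : Perm α) ι x hx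

lemma range_alternatingGroupMap_eq_stabilizer [Nontrivial α] (hι : Set.range ι = {x}ᶜ) :
    (alternatingGroupMap ι).range = stabilizer (alternatingGroup β) x := by
  have hcard := card_eq_card_add_one_of_range_eq hι
  have := alternatingGroup.isPretransitive_of_three_le_card β <| by
    have := Finite.one_lt_card (α := α)
    omega
  exact eq_stabilizer_of_le_of_index_eq_card
    (range_alternatingGroupMap_le_stabilizer (by simp [hι]))
    (index_range_eq_card_of_injective hcard (alternatingGroupMap_injective ι))

theorem isLocalizationHom_alternatingGroupMap (hα : 5 ≤ Nat.card α) (hι : Set.range ι = {x}ᶜ)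
    (hconj : ∀ b : MulAut (alternatingGroup α), ∃ c : Perm α, b = MulAut.conjNormal c) :
    IsLocalizationHom (alternatingGroupMap ι) := by
  have hcard := card_eq_card_add_one_of_range_eq hι
  have : Nontrivial α := Finite.one_lt_card_iff_nontrivial.1 (by omega)
  have : IsSimpleGroup (alternatingGroup α) := alternatingGroup.isSimpleGroup hα
  have : IsSimpleGroup (alternatingGroup β) := alternatingGroup.isSimpleGroup (by omega)
  have := alternatingGroup.isPretransitive_of_three_le_card β (by omega)
  have hrange := range_alternatingGroupMap_eq_stabilizer hι
  refine isLocalizationHom_of_isSimpleGroup (alternatingGroupMap_injective ι)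
    (fun b => ?extend_automorphism) (fun g hg => ?conjugate_copies)
    (fun a ha => ?trivial_centralizer)
  case extend_automorphism =>
    obtain ⟨c, rfl⟩ := hconj b
    exact ⟨_, conjNormal_alternatingGroupMap ι c⟩
  case conjugate_copies =>
    rw [hrange]
    exact exists_mulAut_map_eq_stabilizer (by omega) _
      (index_range_eq_card_of_injective hcard hg) x
  case trivial_centralizer =>
    refine mulAut_eq_one_of_fixes_stabilizer (x := x) a
      (fun y z => eq_or_eq_of_stabilizer_inf_stabilizer_le (by omega)) fun k hk => ?_
    obtain ⟨σ, rfl⟩ := hrange.ge hk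
    exact ha σ

end AlternatingGroupMap

theorem statement12_general {p : ℕ} (hp : p.Prime) (h5 : 5 ≤ p) :
    (∀ σ : alternatingGroup (Fin p),
      Equiv.Perm.viaEmbeddingHom Fin.castSuccEmb (σ : Equiv.Perm (Fin p)) ∈
        alternatingGroup (Fin (p + 1))) ∧
    (∀ f : alternatingGroup (Fin p) →* alternatingGroup (Fin (p + 1)),
      (∀ σ : alternatingGroup (Fin p),
        (f σ : Equiv.Perm (Fin (p + 1))) =
          Equiv.Perm.viaEmbeddingHom Fin.castSuccEmb (σ : Equiv.Perm (Fin p))) →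
      IsLocalizationHom f) := by
  refine ⟨viaEmbeddingHom_mem_alternatingGroup _, fun f hf => ?_⟩
  have hf_eq : f = alternatingGroupMap Fin.castSuccEmb :=
    MonoidHom.ext fun σ => Subtype.ext (hf σ)
  have hrange : Set.range (Fin.castSuccEmb : Fin p ↪ Fin (p + 1)) = {Fin.last p}ᶜ := by
    ext i
    exact Fin.exists_castSucc_eq
  rw [← Nat.card_fin p] at hp h5
  rw [hf_eq]
  exact isLocalizationHom_alternatingGroupMap h5 hrange
    (exists_mulAut_eq_conjNormal_of_prime hp h5)

/-- The inclusion `A_5 ↪ A_6` (extending an even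
permutation of `Fin 5` to `Fin (n+1)` by fixing the extra point) is a localization. -/
theorem statement12 :
    (∀ σ : alternatingGroup (Fin 5),
      Equiv.Perm.viaEmbeddingHom Fin.castSuccEmb (σ : Equiv.Perm (Fin 5)) ∈
        alternatingGroup (Fin (5 + 1))) ∧
    (∀ f : alternatingGroup (Fin 5) →* alternatingGroup (Fin (5 + 1)),
      (∀ σ : alternatingGroup (Fin 5),
        (f σ : Equiv.Perm (Fin (5 + 1))) =
          Equiv.Perm.viaEmbeddingHom Fin.castSuccEmb (σ : Equiv.Perm (Fin 5))) →
      IsLocalizationHom f) :=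
  statement12_general Nat.prime_five le_rfl
end

section
/- The inclusion A_6 ↪ A_7, given by extending each even permutation of {1, …, 6} to a permutation of {1, …, 7} fixing the point 7, is NOT a localization; that is, the precomposition map Hom(A_7, A_7) → Hom(A_6, A_7) is not a bijection. -/
/-!
A simple group of order 60 acts transitively on its six Sylow 5-subgroups, and point stabilizers
have order 10, so no element of order 3 fixes a point. Hence `A_5` embeds in `A_6` as a subgroup `H`
of index 6 without 3-cycles, and the action of `A_6` on the six cosets of `H` is an endomorphism
`α` of `A_6` taking each 3-cycle to a permutation without fixed points.

Suppose `ψ : A_7 → A_7` extends the composite of `α` with the inclusion `A_6 ⊂ A_7`. As `A_7` is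
simple, `ψ` is bijective. It maps the stabilizer of the last point into itself, hence permutes the
point stabilizers, and so it preserves the number of fixed points. But a 3-cycle in `A_6` fixes four
of the seven points, and its image under `ψ` only the last one.
-/

open Equiv Equiv.Perm MulAction

section MulAction

variable {G K X Y : Type*} [Group G] [Group K] [MulAction G X] [MulAction K Y]

theorem exists_mulActionHom_of_stabilizer_le_comap [IsPretransitive G X] {ψ : G →* K} {x : X}
    {y : Y} (h : stabilizer G x ≤ (stabilizer K y).comap ψ) : ∃ π : X →ₑ[ψ] Y, π x = y := by
  choose t ht using exists_smul_eq G x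
  have map_smul_eq {a b : G} (hab : a • x = b • x) : ψ a • y = ψ b • y := by
    have hmem : b⁻¹ * a ∈ stabilizer G x := by
      rw [mem_stabilizer_iff, mul_smul, hab, inv_smul_smul]
    have hfix : ψ (b⁻¹ * a) • y = y := h hmem
    rwa [map_mul, map_inv, mul_smul, inv_smul_eq_iff] at hfix
  refine ⟨⟨fun z => ψ (t z) • y, fun g z => ?_⟩, ?_⟩
  · rw [← mul_smul, ← map_mul]
    exact map_smul_eq (by rw [ht, mul_smul, ht])
  · calc
      ψ (t x) • y = ψ 1 • y := map_smul_eq (by rw [ht, one_smul])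
      _ = y := by rw [map_one, one_smul]

theorem mulActionHom_surjective_of_surjective [IsPretransitive K Y] [Nonempty X] {ψ : G →* K}
    (hψ : Function.Surjective ψ) (π : X →ₑ[ψ] Y) : Function.Surjective π := by
  intro y
  obtain ⟨x⟩ := ‹Nonempty X›
  obtain ⟨k, hk⟩ := exists_smul_eq K (π x) y
  obtain ⟨g, rfl⟩ := hψ k
  exact ⟨g • x, by rw [map_smulₛₗ, hk]⟩

theorem orderOf_mul_card_dvd_card_of_smul_eq [IsPretransitive G X] {g : G} {x : X}
    (h : g • x = x) : orderOf g * Nat.card X ∣ Nat.card G := by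
  rw [← Subgroup.card_mul_index (stabilizer G x), index_stabilizer_of_transitive]
  exact mul_dvd_mul_right (Subgroup.orderOf_dvd_natCard _ h) _

end MulAction

section Groups

variable {G : Type*} [Group G]

theorem monoidHom_injective_of_ne_one [IsSimpleGroup G] {K : Type*} [Group K] {ρ : G →* K}
    (hρ : ρ ≠ 1) : Function.Injective ρ := by
  rw [← MonoidHom.ker_eq_bot_iff]
  exact ρ.normal_ker.eq_bot_or_eq_top.resolve_right (mt MonoidHom.ker_eq_top_iff.1 hρ)

theorem monoidHom_eq_one_of_isPerfect [Group.IsPerfect G] {A : Type*} [CommGroup A] (χ : G →* A) :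
    χ = 1 := by
  rw [← MonoidHom.ker_eq_top_iff, eq_top_iff, ← Group.IsPerfect.commutator_eq_top (G := G)]
  exact Abelianization.commutator_subset_ker χ

theorem exists_monoidHom_alternatingGroup_smul_equiv [Group.IsPerfect G] {X Y : Type*}
    [MulAction G X] [Fintype Y] [DecidableEq Y] (e : X ≃ Y) :
    ∃ ρ : G →* alternatingGroup Y, ∀ g x, ρ g • e x = e (g • x) := by
  let θ : G →* Perm Y := e.permCongrHom.toMonoidHom.comp (toPermHom G X)
  have hθ (g : G) : θ g ∈ alternatingGroup Y :=
    DFunLike.congr_fun (monoidHom_eq_one_of_isPerfect (sign.comp θ)) g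
  refine ⟨θ.codRestrict _ hθ, fun g x => ?_⟩
  simp [θ, Subgroup.smul_def]

theorem card_sylow_five_of_card_eq_sixty [IsSimpleGroup G] (hG : Nat.card G = 60) :
    Nat.card (Sylow 5 G) = 6 := by
  have : Finite G := Nat.finite_of_card_ne_zero (by lia)
  have : Fact (Nat.Prime 5) := ⟨by norm_num⟩
  obtain ⟨P⟩ : Nonempty (Sylow 5 G) := inferInstance
  have hP : Nat.card P = 5 := by
    have hfactor : Nat.factorization 60 5 = 1 := by decide +kernel
    rw [P.card_eq_multiplicity, hG, hfactor, pow_one]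
  have hindex : (P : Subgroup G).index = 12 := by
    have := (P : Subgroup G).card_mul_index
    rw [hG, hP] at this
    lia
  have hdvd : Nat.card (Sylow 5 G) ∣ 12 := hindex ▸ P.card_dvd_index
  have hmod : Nat.card (Sylow 5 G) ≡ 1 [MOD 5] := card_sylow_modEq_one 5 G
  have hne : Nat.card (Sylow 5 G) ≠ 1 := by
    intro hone
    have : Subsingleton (Sylow 5 G) := (Nat.card_eq_one_iff_unique.1 hone).1
    rcases P.normal_of_subsingleton.eq_bot_or_eq_top with hbot | htop
    · rw [hbot, Subgroup.index_bot] at hindex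
      lia
    · rw [htop, Subgroup.index_top] at hindex
      lia
  have hle := Nat.le_of_dvd (by norm_num) hdvd
  interval_cases Nat.card (Sylow 5 G) <;> simp_all [Nat.ModEq]

end Groups

theorem exists_monoidHom_alternatingGroup_six_of_card_eq_sixty {G : Type*} [Group G]
    [IsSimpleGroup G] [Group.IsPerfect G] (hG : Nat.card G = 60) :
    ∃ ρ : G →* alternatingGroup (Fin 6),
      Function.Injective ρ ∧ ∀ g, 3 ∣ orderOf g → ∀ i : Fin 6, ρ g • i ≠ i := by
  have : Finite G := Nat.finite_of_card_ne_zero (by lia)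
  have : Fact (Nat.Prime 5) := ⟨by norm_num⟩
  have hsylow : Nat.card (Sylow 5 G) = 6 := card_sylow_five_of_card_eq_sixty hG
  let e : Sylow 5 G ≃ Fin 6 := Finite.equivFinOfCardEq hsylow
  obtain ⟨ρ, hρ⟩ := exists_monoidHom_alternatingGroup_smul_equiv (G := G) e
  refine ⟨ρ, monoidHom_injective_of_ne_one ?_, fun g hg i hi => ?_⟩
  · rintro rfl
    obtain ⟨g, hg⟩ := exists_smul_eq G (e.symm 0) (e.symm 1)
    simpa [hg] using hρ g (e.symm 0)
  · obtain ⟨P, rfl⟩ := e.surjective i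
    have hfix : g • P = P := e.injective ((hρ g P).symm.trans hi)
    have hdvd : orderOf g * 6 ∣ 60 := hsylow ▸ hG ▸ orderOf_mul_card_dvd_card_of_smul_eq hfix
    have : 3 * 6 ∣ 60 := (mul_dvd_mul_right hg 6).trans hdvd
    lia

theorem isPerfect_alternatingGroup {α : Type*} [Fintype α] [DecidableEq α]
    (h5 : 5 ≤ Nat.card α) : Group.IsPerfect (alternatingGroup α) :=
  ⟨commutator_alternatingGroup_eq_top h5⟩

theorem exists_apply_eq_of_isThreeCycle {α : Type*} [Fintype α] [DecidableEq α]
    (h4 : 4 ≤ Fintype.card α) {c : Perm α} (hc : c.IsThreeCycle) : ∃ i, c i = i := by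
  have hlt : c.support.card < (Finset.univ : Finset α).card := by
    rw [hc.card_support, Finset.card_univ]
    lia
  obtain ⟨i, -, hi⟩ := Finset.exists_mem_notMem_of_card_lt_card hlt
  exact ⟨i, notMem_support.1 hi⟩

theorem exists_subgroup_index_eq_six_forall_not_isThreeCycle :
    ∃ H : Subgroup (alternatingGroup (Fin 6)),
      H.index = 6 ∧ ∀ g ∈ H, ¬ (g : Perm (Fin 6)).IsThreeCycle := by
  have : IsSimpleGroup (alternatingGroup (Fin 5)) := alternatingGroup.isSimpleGroup (by simp)
  have : Group.IsPerfect (alternatingGroup (Fin 5)) := isPerfect_alternatingGroup (by simp)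
  have hA₅ : Nat.card (alternatingGroup (Fin 5)) = 60 := by
    rw [nat_card_alternatingGroup, Nat.card_fin]; rfl
  have hA₆ : Nat.card (alternatingGroup (Fin 6)) = 360 := by
    rw [nat_card_alternatingGroup, Nat.card_fin]; rfl
  obtain ⟨ρ, hinj, hfree⟩ := exists_monoidHom_alternatingGroup_six_of_card_eq_sixty hA₅
  refine ⟨ρ.range, ?_, ?_⟩
  · have hrange : Nat.card ρ.range = 60 := by
      rw [← hA₅, Nat.card_congr (ρ.ofInjective hinj).toEquiv]
    have hmul := ρ.range.card_mul_index
    rw [hrange, hA₆] at hmul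
    lia
  · rintro _ ⟨g, rfl⟩ hthree
    have horder : orderOf g = 3 := by
      rw [← orderOf_injective ρ hinj, ← Subgroup.orderOf_coe, hthree.orderOf]
    obtain ⟨i, hi⟩ := exists_apply_eq_of_isThreeCycle (by simp) hthree
    exact hfree g horder.symm.dvd i hi

theorem exists_monoidHom_forall_isThreeCycle_smul_ne :
    ∃ α : alternatingGroup (Fin 6) →* alternatingGroup (Fin 6),
      ∀ c : alternatingGroup (Fin 6), (c : Perm (Fin 6)).IsThreeCycle →
        ∀ i : Fin 6, α c • i ≠ i := by
  have : Group.IsPerfect (alternatingGroup (Fin 6)) := isPerfect_alternatingGroup (by simp)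
  obtain ⟨H, hindex, hH⟩ := exists_subgroup_index_eq_six_forall_not_isThreeCycle
  let e : alternatingGroup (Fin 6) ⧸ H ≃ Fin 6 := Finite.equivFinOfCardEq hindex
  obtain ⟨α, hα⟩ := exists_monoidHom_alternatingGroup_smul_equiv (G := alternatingGroup (Fin 6)) e
  refine ⟨α, fun c hc i hi => ?_⟩
  obtain ⟨q, rfl⟩ := e.surjective i
  obtain ⟨g, rfl⟩ := QuotientGroup.mk_surjective q
  have hfix : (g : alternatingGroup (Fin 6) ⧸ H) = (c * g : alternatingGroup (Fin 6)) :=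
    e.injective (hi.symm.trans (hα c g))
  have hmem : g⁻¹ * c * g ∈ H := mul_assoc g⁻¹ c g ▸ QuotientGroup.eq.1 hfix
  apply hH _ hmem
  calc
    ((g : Perm (Fin 6))⁻¹ * c * g).cycleType = (c : Perm (Fin 6)).cycleType :=
      cycleType_conj (τ := (g : Perm (Fin 6))⁻¹)
    _ = {3} := hc

theorem exists_viaEmbeddingHom_eq {α β : Type*} (ι : α ↪ β) {τ : Perm β}
    (hτ : ∀ y ∉ Set.range ι, τ y = y) : ∃ σ, viaEmbeddingHom ι σ = τ := by
  classical
  have hrange (y : β) : τ y ∈ Set.range ι ↔ y ∈ Set.range ι := by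
    refine ⟨fun h => ?_, fun h => ?_⟩ <;> by_contra hy
    · exact hy (hτ y hy ▸ h)
    · exact hy ((τ.injective (hτ _ hy)).symm ▸ h)
  let e : α ≃ Set.range ι := ofInjective ι ι.injective
  refine ⟨e.permCongr.symm (τ.subtypePerm hrange), ?_⟩
  rw [viaEmbeddingHom_apply]
  ext y
  by_cases hy : y ∈ Set.range ι
  · obtain ⟨x, rfl⟩ := hy
    rw [viaEmbedding_apply]
    exact congrArg Subtype.val (e.apply_symm_apply _)
  · rw [viaEmbedding_apply_of_notMem _ _ _ hy, hτ y hy]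

section AlternatingInclusion

variable {X Y : Type*} [Fintype X] [DecidableEq X] [Fintype Y] [DecidableEq Y] (ι : X ↪ Y)

theorem sign_viaEmbeddingHom_s13 (σ : Perm X) : sign (viaEmbeddingHom ι σ) = sign σ := by
  rw [viaEmbeddingHom_apply, viaEmbedding, sign_extendDomain]

theorem viaEmbeddingHom_mem_alternatingGroup_s13 (σ : alternatingGroup X) :
    viaEmbeddingHom ι (σ : Perm X) ∈ alternatingGroup Y :=
  (sign_viaEmbeddingHom_s13 ι σ).trans σ.2

/-- The inclusion of alternating groups induced by an embedding `ι : X ↪ Y`: an even permutation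
of `X` is extended to `Y` by fixing every point outside the range of `ι`. -/
noncomputable def alternatingInclusion : alternatingGroup X →* alternatingGroup Y :=
  ((viaEmbeddingHom ι).comp (alternatingGroup X).subtype).codRestrict _
    (viaEmbeddingHom_mem_alternatingGroup_s13 ι)

theorem alternatingInclusion_smul_apply (σ : alternatingGroup X) (x : X) :
    alternatingInclusion ι σ • ι x = ι (σ • x) :=
  viaEmbedding_apply _ ι x

variable {ι} {y : Y}

theorem range_alternatingInclusion (hι : Set.range ι = {y}ᶜ) :
    (alternatingInclusion ι).range = stabilizer (alternatingGroup Y) y := by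
  refine le_antisymm ?_ fun τ hτ => ?_
  · rintro _ ⟨σ, rfl⟩
    exact viaEmbedding_apply_of_notMem _ ι y (by simp [hι])
  · have hfix : ∀ z ∉ Set.range ι, (τ : Perm Y) z = z := by
      intro z hz
      obtain rfl : z = y := by simpa [hι] using hz
      exact hτ
    obtain ⟨σ, hσ⟩ := exists_viaEmbeddingHom_eq ι hfix
    have hsign : sign σ = 1 := by rw [← sign_viaEmbeddingHom_s13 ι, hσ, τ.2]
    exact ⟨⟨σ, hsign⟩, Subtype.ext hσ⟩

variable {α : alternatingGroup X →* alternatingGroup X}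
  {ψ : alternatingGroup Y →* alternatingGroup Y}

theorem exists_smul_eq_of_surjective_of_comp_eq (hY : 3 ≤ Nat.card Y)
    (hι : Set.range ι = {y}ᶜ) (hψ : Function.Surjective ψ)
    (hcomp : ψ.comp (alternatingInclusion ι) = (alternatingInclusion ι).comp α)
    {σ : alternatingGroup X} {x : X} (hx : σ • x = x) : ∃ x' : X, α σ • x' = x' := by
  have : IsPretransitive (alternatingGroup Y) Y :=
    alternatingGroup.isPretransitive_of_three_le_card Y hY
  have hψ_apply (σ) : ψ (alternatingInclusion ι σ) = alternatingInclusion ι (α σ) :=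
    DFunLike.congr_fun hcomp σ
  have hstab : stabilizer (alternatingGroup Y) y ≤ (stabilizer (alternatingGroup Y) y).comap ψ := by
    rw [← range_alternatingInclusion hι]
    rintro _ ⟨σ, rfl⟩
    exact ⟨α σ, (hψ_apply σ).symm⟩
  obtain ⟨π, hπy⟩ := exists_mulActionHom_of_stabilizer_le_comap hstab
  have : Nonempty Y := ⟨y⟩
  have hπ : Function.Injective π :=
    Finite.injective_iff_surjective.2 (mulActionHom_surjective_of_surjective hψ π)
  have hne_y (x : X) : ι x ≠ y := hι.subset ⟨x, rfl⟩
  obtain ⟨x', hx'⟩ : π (ι x) ∈ Set.range ι := by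
    rw [hι, Set.mem_compl_singleton_iff, ← hπy]
    exact hπ.ne (hne_y x)
  refine ⟨x', ι.injective ?_⟩
  calc
    ι (α σ • x') = ψ (alternatingInclusion ι σ) • π (ι x) := by
      rw [← alternatingInclusion_smul_apply, hψ_apply, hx']
    _ = π (alternatingInclusion ι σ • ι x) := (map_smulₛₗ π _ _).symm
    _ = ι x' := by rw [alternatingInclusion_smul_apply, hx, hx']

theorem exists_smul_eq_of_comp_eq (hY : 5 ≤ Nat.card Y) (hι : Set.range ι = {y}ᶜ)
    (hcomp : ψ.comp (alternatingInclusion ι) = (alternatingInclusion ι).comp α)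
    {σ : alternatingGroup X} {x : X} (hx : σ • x = x) : ∃ x' : X, α σ • x' = x' := by
  have : IsSimpleGroup (alternatingGroup Y) := alternatingGroup.isSimpleGroup hY
  by_cases hψ : ψ = 1
  · have hone : alternatingInclusion ι (α σ) = 1 := by
      rw [← MonoidHom.comp_apply, ← hcomp, hψ, MonoidHom.one_comp, MonoidHom.one_apply]
    refine ⟨x, ι.injective ?_⟩
    rw [← alternatingInclusion_smul_apply, hone, one_smul]
  · exact exists_smul_eq_of_surjective_of_comp_eq (by lia) hι
      (Finite.surjective_of_injective (monoidHom_injective_of_ne_one hψ)) hcomp hx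

end AlternatingInclusion

/-- The inclusion `A_6 ↪ A_7` (extending an even permutation of `Fin 6`
to `Fin 7` by fixing the extra point) is NOT a localization. -/
theorem statement13 :
    (∀ σ : alternatingGroup (Fin 6),
      Equiv.Perm.viaEmbeddingHom Fin.castSuccEmb (σ : Equiv.Perm (Fin 6)) ∈
        alternatingGroup (Fin (6 + 1))) ∧
    (∀ f : alternatingGroup (Fin 6) →* alternatingGroup (Fin (6 + 1)),
      (∀ σ : alternatingGroup (Fin 6),
        (f σ : Equiv.Perm (Fin (6 + 1))) =
          Equiv.Perm.viaEmbeddingHom Fin.castSuccEmb (σ : Equiv.Perm (Fin 6))) →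
      ¬ IsLocalizationHom f) := by
  refine ⟨viaEmbeddingHom_mem_alternatingGroup_s13 _, fun f hf hloc => ?_⟩
  obtain rfl : f = alternatingInclusion Fin.castSuccEmb :=
    MonoidHom.ext fun σ => Subtype.ext (hf σ)
  obtain ⟨α, hα⟩ := exists_monoidHom_forall_isThreeCycle_smul_ne
  obtain ⟨ψ, hψ⟩ := hloc.surjective ((alternatingInclusion Fin.castSuccEmb).comp α)
  have hc : (swap 0 1 * swap 0 2 : Perm (Fin 6)).IsThreeCycle :=
    isThreeCycle_swap_mul_swap_same (by decide) (by decide) (by decide)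
  have hrange : Set.range Fin.castSuccEmb = {Fin.last 6}ᶜ := Set.ext fun _ => Fin.exists_castSucc_eq
  obtain ⟨i, hi⟩ := exists_apply_eq_of_isThreeCycle (by simp) hc
  obtain ⟨j, hj⟩ := exists_smul_eq_of_comp_eq (σ := ⟨_, hc.mem_alternatingGroup⟩) (by simp)
    hrange hψ hi
  exact hα _ hc j hj
end

section
/- Let H and G be non-abelian finite simple groups and i : H → G an injective group homomorphism. Then i is a localization if and only if the map from Aut(G) to the set of nontrivial group homomorphisms H → G, sending an automorphism α to the composite α ∘ i, is a bijection. -/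
/-! Precomposition with `i` sends the trivial endomorphism to the trivial homomorphism, so it is
bijective exactly when it restricts to a bijection between the nontrivial ones. By Schur's argument
the nontrivial endomorphisms of a finite simple group are exactly its automorphisms. -/

open Function Set

theorem bijective_iff_bijOn_compl_singleton {α β : Type*} (f : α → β) (a : α) :
    Bijective f ↔ BijOn f {a}ᶜ {f a}ᶜ := by
  refine ⟨fun hf => (bijOn_singleton.2 rfl).compl hf, fun hf => ?_⟩
  have hf_insert : BijOn f (insert a {a}ᶜ) (insert (f a) {f a}ᶜ) :=
    hf.insert (notMem_compl_iff.2 rfl)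
  rwa [insert_eq, insert_eq, union_compl_self, union_compl_self, bijOn_univ] at hf_insert

theorem monoidHom_injective_of_ne_one_s16 {G M : Type*} [Group G] [IsSimpleGroup G] [MulOneClass M]
    {f : G →* M} (hf : f ≠ 1) : Injective f :=
  f.ker_eq_bot_iff.1 <| f.normal_ker.eq_bot_or_eq_top.resolve_right <|
    mt MonoidHom.ker_eq_top_iff.1 hf

theorem monoidHom_bijective_of_ne_one {G : Type*} [Group G] [IsSimpleGroup G] [Finite G]
    {ψ : G →* G} (hψ : ψ ≠ 1) : Bijective ψ :=
  Finite.injective_iff_bijective.1 (monoidHom_injective_of_ne_one_s16 hψ)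

theorem mulEquiv_toMonoidHom_ne_one {M N : Type*} [MulOneClass M] [MulOneClass N] [Nontrivial M]
    (e : M ≃* N) : e.toMonoidHom ≠ 1 := by
  intro he
  obtain ⟨x, hx⟩ := exists_ne (1 : M)
  exact hx (e.map_eq_one_iff.1 (DFunLike.congr_fun he x))

theorem range_mulAut_toMonoidHom {G : Type*} [MulOneClass G] [Nontrivial G]
    (hG : ∀ ψ : G →* G, ψ ≠ 1 → Bijective ψ) :
    range (fun α : MulAut G => α.toMonoidHom) = {1}ᶜ := by
  ext ψ
  constructor
  · rintro ⟨α, rfl⟩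
    exact mulEquiv_toMonoidHom_ne_one α
  · exact fun hψ => ⟨MulEquiv.ofBijective ψ (hG ψ hψ), rfl⟩

theorem isLocalizationHom_iff_bijOn_compl_one {H G : Type*} [Group H] [Group G] (i : H →* G) :
    IsLocalizationHom i ↔ BijOn (fun ψ : G →* G => ψ.comp i) {1}ᶜ {1}ᶜ :=
  bijective_iff_bijOn_compl_singleton (fun ψ : G →* G => ψ.comp i) 1

theorem statement16_general {H G : Type*} [Group H] [Group G] [Nontrivial G]
    (hG : ∀ ψ : G →* G, ψ ≠ 1 → Bijective ψ) (i : H →* G) :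
    IsLocalizationHom i ↔
      BijOn (fun α : MulAut G => α.toMonoidHom.comp i) univ {f : H →* G | f ≠ 1} := by
  rw [isLocalizationHom_iff_bijOn_compl_one, ← range_mulAut_toMonoidHom hG, ← image_univ]
  exact (bijOn_comp_iff MulEquiv.toMonoidHom_injective.injOn).symm

/-- For non-abelian finite simple groups `H`, `G` and an injective
homomorphism `i : H →* G`, the map `i` is a localization iff `α ↦ α ∘ i` is a
bijection from `Aut(G)` onto the set of nontrivial homomorphisms `H →* G`. -/
theorem statement16 (H G : Type*) [Group H] [Group G] [Finite H] [Finite G]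
    [IsSimpleGroup H] [IsSimpleGroup G]
    (hH : ¬ ∀ a b : H, a * b = b * a)
    (hG : ¬ ∀ a b : G, a * b = b * a)
    (i : H →* G) (hi : Function.Injective i) :
    IsLocalizationHom i ↔
      Set.BijOn (fun α : MulAut G => α.toMonoidHom.comp i)
        Set.univ {f : H →* G | f ≠ 1} :=
  statement16_general (fun _ => monoidHom_bijective_of_ne_one) i
end
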